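/- Let n ≥ 2 and let S be a finite set of unit vectors in ℝ^n with S = −S. If S is not extreme, then for every ε > 0 there exists a linear map T : ℝ^n → ℝ^n with ‖T − Id‖ < ε, ‖Tx‖ ≥ ‖x‖ for all x ∈ S, and det T < 1. -/

import Mathlib

open scoped RealInnerProductSpace
open Metric MeasureTheory

noncomputable section

abbrev Euc (n : ℕ) := EuclideanSpace ℝ (Fin n)

/-- The rank-one symmetric map `P_x : y ↦ ⟪y, x⟫ • x`. -/
def projMap {F : Type*} [NormedAddCommGroup F] [InnerProductSpace ℝ F] (x : F) :
    F →ₗ[ℝ] F where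
  toFun y := (⟪y, x⟫) • x
  map_add' y z := by simp [inner_add_left, add_smul]
  map_smul' c y := by simp [real_inner_smul_left, mul_smul]

/-- A configuration is perfect if the maps `P_x`, `x ∈ S`, span the symmetric maps. -/
def IsPerfectCfg {F : Type*} [NormedAddCommGroup F] [InnerProductSpace ℝ F]
    (S : Set F) : Prop :=
  ∀ T : F →ₗ[ℝ] F, T.IsSymmetric → T ∈ Submodule.span ℝ (projMap '' S)

/-- A configuration is eutactic if `Id = Σ_{x∈S} υ_x P_x` with `υ_x > 0`, `υ_x = υ_{-x}`. -/
def IsEutacticCfg {F : Type*} [NormedAddCommGroup F] [InnerProductSpace ℝ F]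
    (S : Set F) : Prop :=
  ∃ υ : F → ℝ, (∀ x ∈ S, 0 < υ x) ∧ (∀ x ∉ S, υ x = 0) ∧
    (Function.support υ).Finite ∧ (∀ x, υ x = υ (-x)) ∧
    ∑ᶠ x, υ x • projMap x = (LinearMap.id : F →ₗ[ℝ] F)

/-- A configuration is semi-eutactic if `Id = Σ_{x∈S} υ_x P_x` with `υ_x ≥ 0`, `υ_x = υ_{-x}`. -/
def IsSemiEutacticCfg {F : Type*} [NormedAddCommGroup F] [InnerProductSpace ℝ F]
    (S : Set F) : Prop :=
  ∃ υ : F → ℝ, (∀ x ∈ S, 0 ≤ υ x) ∧ (∀ x ∉ S, υ x = 0) ∧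
    (Function.support υ).Finite ∧ (∀ x, υ x = υ (-x)) ∧
    ∑ᶠ x, υ x • projMap x = (LinearMap.id : F →ₗ[ℝ] F)

/-- A configuration is extreme if it is perfect and eutactic. -/
def IsExtremeCfg {F : Type*} [NormedAddCommGroup F] [InnerProductSpace ℝ F]
    (S : Set F) : Prop :=
  IsPerfectCfg S ∧ IsEutacticCfg S

/-- Hilbert–Schmidt (Frobenius) norm of a linear map on `ℝ^n`. -/
def frobNorm {n : ℕ} (T : Euc n →ₗ[ℝ] Euc n) : ℝ :=
  Real.sqrt (∑ j, ∑ i, (T (EuclideanSpace.single j 1) i) ^ 2)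

/-- The lattice `T ℤ^n` as a set of points. -/
def latticeSet {n : ℕ} (T : Euc n →ₗ[ℝ] Euc n) : Set (Euc n) :=
  {v | ∃ z : Fin n → ℤ, v = T (∑ i, (z i : ℝ) • EuclideanSpace.single i 1)}

/-- A set is an (n-dimensional) lattice if it is `T ℤ^n` for an invertible `T`. -/
def IsLattice {n : ℕ} (Λ : Set (Euc n)) : Prop :=
  ∃ T : Euc n →ₗ[ℝ] Euc n, LinearMap.det T ≠ 0 ∧ Λ = latticeSet T

/-- The determinant `d(Λ) = |det T|` of a lattice. -/
def latDet {n : ℕ} (Λ : Set (Euc n)) : ℝ :=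
  sInf {d | ∃ T : Euc n →ₗ[ℝ] Euc n, Λ = latticeSet T ∧ d = |LinearMap.det T|}

/-- The metric `δ(Λ, Λ') = inf ‖T - T'‖` on the space of lattices. -/
def latDist {n : ℕ} (Λ Λ' : Set (Euc n)) : ℝ :=
  sInf {d | ∃ T T' : Euc n →ₗ[ℝ] Euc n,
    Λ = latticeSet T ∧ Λ' = latticeSet T' ∧ d = frobNorm (T - T')}

/-- The minimal norm `m(Λ)`. -/
def minNorm {n : ℕ} (Λ : Set (Euc n)) : ℝ :=
  sInf {r | ∃ x ∈ Λ, x ≠ 0 ∧ r = ‖x‖ ^ 2}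

/-- The set `S(Λ)` of minimal vectors of a lattice. -/
def minVecs {n : ℕ} (Λ : Set (Euc n)) : Set (Euc n) :=
  {x | x ∈ Λ ∧ x ≠ 0 ∧ ‖x‖ ^ 2 = minNorm Λ}

/-- An origin-symmetric convex body. -/
structure IsSymCB {n : ℕ} (K : Set (Euc n)) : Prop where
  convex : Convex ℝ K
  compact : IsCompact K
  nonempty_interior : (interior K).Nonempty
  symm : -K = K

/-- A lattice is admissible for a body if it meets the interior only at the origin. -/
def IsAdmissible {n : ℕ} (Λ K : Set (Euc n)) : Prop :=
  Λ ∩ interior K ⊆ {0}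

/-- The critical determinant `d_K`. -/
def critDet {n : ℕ} (K : Set (Euc n)) : ℝ :=
  sInf {d | ∃ Λ : Set (Euc n), IsLattice Λ ∧ IsAdmissible Λ K ∧ d = latDet Λ}

/-- A critical lattice of `K`: an admissible lattice attaining the critical determinant. -/
def IsCriticalLattice {n : ℕ} (Λ K : Set (Euc n)) : Prop :=
  IsLattice Λ ∧ IsAdmissible Λ K ∧ latDet Λ = critDet K

/-- The optimal lattice packing fraction `φ(K) = 2⁻ⁿ vol(K) / d_K`. -/
def packFrac {n : ℕ} (K : Set (Euc n)) : ℝ :=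
  (volume K).toReal / (2 ^ n * critDet K)

/-- The closed unit ball `Bⁿ`. -/
def unitBall (n : ℕ) : Set (Euc n) := Metric.closedBall 0 1

/-- The support function of a body. -/
def suppFn {n : ℕ} (K : Set (Euc n)) (x : Euc n) : ℝ :=
  sSup ((fun y => ⟪x, y⟫) '' K)

/-- The radial function of a body. -/
def radFn {n : ℕ} (K : Set (Euc n)) (x : Euc n) : ℝ :=
  sSup {t : ℝ | 0 ≤ t ∧ t • x ∈ K}

/-!
If `S` is not extreme, then `Sym` contains a nonzero `A` with `tr A ≤ 0` and `⟪A x, x⟫ ≥ 0` for all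
`x ∈ S`, and `T = Id + t A` works for every small `t > 0`: it does not shorten any vector of `S`,
and AM-GM applied to its eigenvalues gives `det T < 1`.

Such an `A` comes from duality in `Sym`. Either the `P_x` do not span, and some nonzero functional
vanishes on all of them, or `Id` lies outside the open convex cone of their positive combinations,
and Hahn–Banach separates it from that cone. Up to sign, the functional found is nonnegative on
every `P_x` and nonpositive at `Id`; by nondegeneracy of the trace form it is `B ↦ tr (A B)`, whose
values at `P_x` and `Id` are `⟪A x, x⟫` and `tr A`.
-/

section Reals

variable {ι : Type*} [Fintype ι]

lemma prod_lt_one_of_sum_le_card {μ : ι → ℝ} (hnonneg : ∀ i, 0 ≤ μ i)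
    (hsum : ∑ i, μ i ≤ Fintype.card ι) (hne : ∃ i, μ i ≠ 1) : ∏ i, μ i < 1 := by
  by_cases hzero : ∃ i, μ i = 0
  · obtain ⟨i, hi⟩ := hzero
    rw [Finset.prod_eq_zero (Finset.mem_univ i) hi]
    exact one_pos
  · have hpos : ∀ i, 0 < μ i := fun i => (hnonneg i).lt_of_ne' fun h => hzero ⟨i, h⟩
    obtain ⟨j, hj⟩ := hne
    calc ∏ i, μ i < ∏ i, Real.exp (μ i - 1) := by
          refine Finset.prod_lt_prod (fun i _ => hpos i)
            (fun i _ => by simpa using Real.add_one_le_exp (μ i - 1)) ⟨j, Finset.mem_univ j, ?_⟩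
          simpa using Real.add_one_lt_exp (sub_ne_zero.mpr hj)
      _ = Real.exp (∑ i, μ i - Fintype.card ι) := by simp [← Real.exp_sum]
      _ ≤ 1 := Real.exp_le_one_iff.mpr (sub_nonpos.mpr hsum)

lemma nonneg_of_forall_pos_lt_sum_mul {a : ι → ℝ} {b : ℝ}
    (h : ∀ c : ι → ℝ, (∀ i, 0 < c i) → b < ∑ i, c i * a i) (i : ι) : 0 ≤ a i := by
  classical
  by_contra! hneg
  have hone : b < ∑ j, a j := by simpa using h 1 fun _ => one_pos
  have ht : 0 < (b - ∑ j, a j) / a i := div_pos_of_neg_of_neg (sub_neg.mpr hone) hneg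
  have hnonneg : 0 ≤ (Pi.single i ((b - ∑ j, a j) / a i) : ι → ℝ) := Pi.single_nonneg.mpr ht.le
  have hlt := h (1 + Pi.single i ((b - ∑ j, a j) / a i)) fun j =>
    add_pos_of_pos_of_nonneg one_pos (hnonneg j)
  simp [add_mul, Finset.sum_add_distrib, Pi.single_apply, div_mul_cancel₀ _ hneg.ne] at hlt

lemma nonpos_of_forall_pos_lt_sum_mul {a : ι → ℝ} {b : ℝ}
    (h : ∀ c : ι → ℝ, (∀ i, 0 < c i) → b < ∑ i, c i * a i) : b ≤ 0 := by
  by_contra! hb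
  have hone : b < ∑ i, a i := by simpa using h 1 fun _ => one_pos
  have hsum : 0 < ∑ i, a i := hb.trans hone
  have hlt := h (fun _ => b / ∑ i, a i) fun _ => div_pos hb hsum
  rw [← Finset.mul_sum, div_mul_cancel₀ _ hsum.ne'] at hlt
  exact lt_irrefl b hlt

end Reals

section Duality

variable {ι V : Type*} [Fintype ι] [AddCommGroup V] [Module ℝ V]

lemma exists_dual_lt_sum_mul_of_forall_sum_smul_ne {v : ι → V} {w : V}
    (hspan : Submodule.span ℝ (Set.range v) = ⊤)
    (hw : ∀ c : ι → ℝ, (∀ i, 0 < c i) → ∑ i, c i • v i ≠ w) :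
    ∃ g : Module.Dual ℝ V, ∀ c : ι → ℝ, (∀ i, 0 < c i) → g w < ∑ i, c i * g (v i) := by
  let _ : TopologicalSpace V := moduleTopology ℝ V
  have : IsModuleTopology ℝ V := ⟨rfl⟩
  have : IsTopologicalAddGroup V := IsModuleTopology.topologicalAddGroup ℝ V
  let L : (ι → ℝ) →ₗ[ℝ] V := Fintype.linearCombination ℝ v
  let P : Set (ι → ℝ) := Set.univ.pi fun _ => Set.Ioi 0
  have hsurj : Function.Surjective L := by
    rw [← LinearMap.range_eq_top, Fintype.range_linearCombination, hspan]
  have hopen : IsOpen (L '' P) := IsModuleTopology.isOpenMap_of_surjective hsurj P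
    (isOpen_set_pi Set.finite_univ fun _ _ => isOpen_Ioi)
  have hconvex : Convex ℝ (L '' P) := (convex_pi fun _ _ => convex_Ioi 0).linear_image L
  have hnotMem : w ∉ L '' P := fun ⟨c, hc, hcw⟩ => hw c (fun i => hc i trivial) hcw
  obtain ⟨f, hf⟩ := geometric_hahn_banach_open_point hconvex hopen hnotMem
  refine ⟨-f, fun c hc => ?_⟩
  simpa [L, Fintype.linearCombination_apply] using hf (L c) ⟨c, fun i _ => hc i, rfl⟩

lemma exists_dual_ne_zero_nonneg_nonpos {v : ι → V} {w : V}
    (h : ¬ (Submodule.span ℝ (Set.range v) = ⊤ ∧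
      ∃ c : ι → ℝ, (∀ i, 0 < c i) ∧ ∑ i, c i • v i = w)) :
    ∃ g : Module.Dual ℝ V, g ≠ 0 ∧ (∀ i, 0 ≤ g (v i)) ∧ g w ≤ 0 := by
  by_cases hspan : Submodule.span ℝ (Set.range v) = ⊤
  · obtain ⟨g, hg⟩ := exists_dual_lt_sum_mul_of_forall_sum_smul_ne hspan
      fun c hc hcw => h ⟨hspan, c, hc, hcw⟩
    refine ⟨g, ?_, nonneg_of_forall_pos_lt_sum_mul hg, nonpos_of_forall_pos_lt_sum_mul hg⟩
    rintro rfl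
    simpa using hg 1 fun _ => one_pos
  · obtain ⟨g, hg, hker⟩ :=
      Submodule.exists_le_ker_of_lt_top _ (lt_top_iff_ne_top.mpr hspan)
    have hv : ∀ i, g (v i) = 0 := fun i => hker (Submodule.subset_span ⟨i, rfl⟩)
    rcases le_total (g w) 0 with hgw | hgw
    · exact ⟨g, hg, fun i => (hv i).ge, hgw⟩
    · exact ⟨-g, neg_ne_zero.mpr hg, fun i => by simp [hv i], by simpa using hgw⟩

end Duality

variable {F : Type*} [NormedAddCommGroup F] [InnerProductSpace ℝ F]

section SymmetricMaps

lemma projMap_eq_rankOne (x : F) :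
    projMap x = (InnerProductSpace.rankOne ℝ x x : F →L[ℝ] F).toLinearMap := by
  ext y
  simp [projMap, real_inner_comm]

lemma projMap_neg (x : F) : projMap (-x) = projMap x := by
  simp [projMap_eq_rankOne]

lemma isSymmetric_projMap (x : F) : (projMap x).IsSymmetric := by
  rw [projMap_eq_rankOne]
  exact InnerProductSpace.isSymmetric_rankOne_self x

variable (F) in
/-- The space `Sym` of symmetric linear maps: perfection says that the `P_x` span it, and the
improving direction `A` is found in it by duality. -/
def symmetricMaps : Submodule ℝ (F →ₗ[ℝ] F) where
  carrier := {T | T.IsSymmetric}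
  add_mem' := LinearMap.IsSymmetric.add
  zero_mem' := LinearMap.IsSymmetric.zero
  smul_mem' c _ hT := hT.smul (conj_trivial c)

/-- The map `P_x` as an element of `Sym`, so that spans and cones of such maps live in `Sym`. -/
def symProj (x : F) : symmetricMaps F := ⟨projMap x, isSymmetric_projMap x⟩

lemma isPerfectCfg_of_span_symProj_eq_top {S : Set F}
    (h : Submodule.span ℝ (symProj '' S) = ⊤) : IsPerfectCfg S := by
  intro T hT
  have hmem : (⟨T, hT⟩ : symmetricMaps F) ∈ Submodule.span ℝ (symProj '' S) := h ▸ trivial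
  have hmap := Submodule.mem_map_of_mem (f := (symmetricMaps F).subtype) hmem
  rwa [Submodule.map_span, ← Set.image_comp] at hmap

lemma isEutacticCfg_of_sum_smul_projMap {S : Finset F} (hsym : ∀ x ∈ S, -x ∈ S) {c : F → ℝ}
    (hpos : ∀ x ∈ S, 0 < c x) (hsum : ∑ x ∈ S, c x • projMap x = LinearMap.id) :
    IsEutacticCfg (S : Set F) := by
  classical
  let υ : F → ℝ := fun x => if x ∈ S then (c x + c (-x)) / 2 else 0
  have hmem_neg : ∀ x, -x ∈ S ↔ x ∈ S := fun x => ⟨fun h => neg_neg x ▸ hsym _ h, hsym x⟩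
  have hsum_neg : ∑ x ∈ S, c (-x) • projMap x = LinearMap.id := by
    rw [← hsum]
    exact Finset.sum_equiv (Equiv.neg F) (fun x => (hmem_neg x).symm)
      fun x _ => by simp [projMap_neg]
  have hzero : ∀ x ∉ S, υ x = 0 := fun x hx => if_neg hx
  have hsupp : Function.support υ ⊆ S := fun x hx => by_contra fun h => hx (hzero x h)
  refine ⟨υ, fun x hx => ?_, hzero, S.finite_toSet.subset hsupp, fun x => ?_, ?_⟩
  · have := hpos x hx
    have := hpos (-x) (hsym x hx)
    simp only [υ, if_pos (Finset.mem_coe.mp hx)]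
    positivity
  · simp [υ, hmem_neg, add_comm]
  · calc ∑ᶠ x, υ x • projMap x = ∑ x ∈ S, υ x • projMap x :=
          finsum_eq_sum_of_support_subset _ ((Function.support_smul_subset_left _ _).trans hsupp)
      _ = ∑ x ∈ S, (2⁻¹ : ℝ) • (c x • projMap x + c (-x) • projMap x) :=
          Finset.sum_congr rfl fun x hx => by simp only [υ, if_pos hx]; module
      _ = LinearMap.id := by
          rw [← Finset.smul_sum, Finset.sum_add_distrib, hsum, hsum_neg]
          module

end SymmetricMaps

section TraceForm

variable (F) in
/-- The trace form `(A, B) ↦ tr (A ∘ B)` on `Sym`, curried so that it represents functionals on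
`Sym` by symmetric maps. -/
def symTraceForm : symmetricMaps F →ₗ[ℝ] Module.Dual ℝ (symmetricMaps F) :=
  ((LinearMap.mul ℝ (Module.End ℝ F)).compr₂ (LinearMap.trace ℝ F)).domRestrict₁₂
    (symmetricMaps F) (symmetricMaps F)

lemma symTraceForm_apply (A B : symmetricMaps F) :
    symTraceForm F A B = LinearMap.trace ℝ F ((A : F →ₗ[ℝ] F) ∘ₗ B) :=
  rfl

variable [FiniteDimensional ℝ F]

lemma trace_comp_projMap (A : F →ₗ[ℝ] F) (x : F) :
    LinearMap.trace ℝ F (A ∘ₗ projMap x) = ⟪A x, x⟫ := by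
  have hcomp : A ∘ₗ projMap x = (InnerProductSpace.rankOne ℝ (A x) x : F →L[ℝ] F).toLinearMap := by
    ext y
    simp [projMap, real_inner_comm]
  rw [hcomp, InnerProductSpace.trace_rankOne, real_inner_comm]

lemma eq_zero_of_trace_comp_self_eq_zero {A : F →ₗ[ℝ] F} (hA : A.IsSymmetric)
    (h : LinearMap.trace ℝ F (A ∘ₗ A) = 0) : A = 0 := by
  let b := stdOrthonormalBasis ℝ F
  have hsum : ∑ i, ‖A (b i)‖ ^ 2 = 0 := by
    rw [← h, LinearMap.trace_eq_sum_inner _ b]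
    exact Finset.sum_congr rfl fun i _ => by
      rw [LinearMap.comp_apply, ← hA, real_inner_self_eq_norm_sq]
  rw [Finset.sum_eq_zero_iff_of_nonneg fun i _ => sq_nonneg _] at hsum
  exact b.toBasis.ext fun i => by simpa using hsum i (Finset.mem_univ i)

lemma symTraceForm_surjective : Function.Surjective (symTraceForm F) := by
  have hinj : Function.Injective (symTraceForm F) :=
    (injective_iff_map_eq_zero _).mpr fun A hA =>
      Subtype.ext (eq_zero_of_trace_comp_self_eq_zero A.2 (DFunLike.congr_fun hA A))
  exact (LinearMap.injective_iff_surjective_of_finrank_eq_finrank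
    Subspace.dual_finrank_eq.symm).mp hinj

lemma exists_isSymmetric_trace_nonpos_of_not_isExtremeCfg {S : Finset F}
    (hsym : ∀ x ∈ S, -x ∈ S) (hS : ¬ IsExtremeCfg (S : Set F)) :
    ∃ A : F →ₗ[ℝ] F, A.IsSymmetric ∧ A ≠ 0 ∧ LinearMap.trace ℝ F A ≤ 0 ∧
      ∀ x ∈ S, 0 ≤ ⟪A x, x⟫ := by
  have hcone : ¬ (Submodule.span ℝ (Set.range fun x : S => symProj (x : F)) = ⊤ ∧
      ∃ c : S → ℝ, (∀ x, 0 < c x) ∧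
        ∑ x, c x • symProj (x : F) = (⟨LinearMap.id, .id⟩ : symmetricMaps F)) := by
    rintro ⟨hspan, c, hpos, hsum⟩
    refine hS ⟨isPerfectCfg_of_span_symProj_eq_top ?_, ?_⟩
    · rwa [Set.image_eq_range]
    · have hext : ∀ x : S, Function.extend Subtype.val c 0 (x : F) = c x :=
        Subtype.val_injective.extend_apply c 0
      refine isEutacticCfg_of_sum_smul_projMap hsym (c := Function.extend Subtype.val c 0)
        (fun x hx => (hpos ⟨x, hx⟩).trans_eq (hext ⟨x, hx⟩).symm) ?_
      rw [← Finset.sum_coe_sort S]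
      simpa [hext, symProj] using congrArg Subtype.val hsum
  obtain ⟨g, hg, hproj, hid⟩ := exists_dual_ne_zero_nonneg_nonpos hcone
  obtain ⟨A, rfl⟩ := symTraceForm_surjective g
  simp only [symTraceForm_apply] at hproj hid
  refine ⟨A, A.2, fun hA => hg ?_, hid, fun x hx => ?_⟩
  · rw [Submodule.coe_eq_zero.mp hA, map_zero]
  · rw [← trace_comp_projMap]
    exact hproj ⟨x, hx⟩

end TraceForm

section Perturbation

lemma norm_le_norm_add_smul {x y : F} (hxy : 0 ≤ ⟪y, x⟫) {t : ℝ} (ht : 0 ≤ t) :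
    ‖x‖ ≤ ‖x + t • y‖ := by
  refine le_of_sq_le_sq ?_ (norm_nonneg _)
  rw [norm_add_sq_real, real_inner_smul_right, real_inner_comm]
  linarith [mul_nonneg ht hxy, sq_nonneg ‖t • y‖]

variable [FiniteDimensional ℝ F]

lemma det_lt_one_of_trace_le_finrank {T : F →ₗ[ℝ] F} (hT : T.IsPositive)
    (htr : LinearMap.trace ℝ F T ≤ Module.finrank ℝ F) (hne : T ≠ LinearMap.id) :
    LinearMap.det T < 1 := by
  have hsymm := hT.isSymmetric
  rw [hsymm.det_eq_prod_eigenvalues rfl]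
  refine prod_lt_one_of_sum_le_card (hT.nonneg_eigenvalues rfl) ?_ ?_
  · simpa [hsymm.trace_eq_sum_eigenvalues rfl] using htr
  · by_contra! hone
    refine hne ((hsymm.eigenvectorBasis rfl).toBasis.ext fun i => ?_)
    simp [hsymm.apply_eigenvectorBasis, hone]

lemma isPositive_id_add_smul {A : F →ₗ[ℝ] F} (hA : A.IsSymmetric) {t : ℝ} (ht : 0 ≤ t)
    (htA : t * ‖A.toContinuousLinearMap‖ ≤ 1) : (LinearMap.id + t • A).IsPositive := by
  refine (LinearMap.isPositive_iff _).mpr ⟨.add .id (hA.smul (conj_trivial t)), fun x => ?_⟩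
  have hAx : -⟪A x, x⟫ ≤ ‖A.toContinuousLinearMap‖ * ‖x‖ * ‖x‖ :=
    (neg_le_abs _).trans <| (abs_real_inner_le_norm _ _).trans <|
      mul_le_mul_of_nonneg_right (A.toContinuousLinearMap.le_opNorm x) (norm_nonneg x)
  have hexpand : ⟪(LinearMap.id + t • A : F →ₗ[ℝ] F) x, x⟫ = ‖x‖ ^ 2 + t * ⟪A x, x⟫ := by
    simp [inner_add_left, real_inner_smul_left]
  rw [hexpand]
  linarith [mul_le_mul_of_nonneg_left hAx ht, mul_le_mul_of_nonneg_right htA (sq_nonneg ‖x‖)]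

lemma det_id_add_smul_lt_one {A : F →ₗ[ℝ] F} (hA : A.IsSymmetric) (hA₀ : A ≠ 0)
    (htr : LinearMap.trace ℝ F A ≤ 0) {t : ℝ} (ht : 0 < t)
    (htA : t * ‖A.toContinuousLinearMap‖ ≤ 1) : LinearMap.det (LinearMap.id + t • A) < 1 := by
  refine det_lt_one_of_trace_le_finrank (isPositive_id_add_smul hA ht.le htA) ?_ ?_
  · simpa using mul_nonpos_of_nonneg_of_nonpos ht.le htr
  · simpa using ⟨ht.ne', hA₀⟩

theorem not_extreme_exists_det_lt_one_general {S : Finset F} (hsym : ∀ x ∈ S, -x ∈ S)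
    (hS : ¬ IsExtremeCfg (S : Set F)) (p : Seminorm ℝ (F →ₗ[ℝ] F)) {ε : ℝ} (hε : 0 < ε) :
    ∃ T : F →ₗ[ℝ] F, p (T - LinearMap.id) < ε ∧ (∀ x ∈ S, ‖x‖ ≤ ‖T x‖) ∧
      LinearMap.det T < 1 := by
  obtain ⟨A, hA, hA₀, htr, hnonneg⟩ := exists_isSymmetric_trace_nonpos_of_not_isExtremeCfg hsym hS
  obtain ⟨t, ht, hsmall⟩ :=
    exists_pos_mul_lt (lt_min hε one_pos) (max (p A) ‖A.toContinuousLinearMap‖)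
  rw [max_mul_of_nonneg _ _ ht.le, max_lt_iff, lt_min_iff, lt_min_iff] at hsmall
  obtain ⟨⟨hpA, -⟩, -, hnormA⟩ := hsmall
  refine ⟨LinearMap.id + t • A, ?_, fun x hx => norm_le_norm_add_smul (hnonneg x hx) ht.le,
    det_id_add_smul_lt_one hA hA₀ htr ht (by linarith)⟩
  rwa [add_sub_cancel_left, map_smul_eq_mul, Real.norm_of_nonneg ht.le, mul_comm]

end Perturbation

/-- The Hilbert–Schmidt norm `frobNorm` bundled as a seminorm: the `ℓ²` norm of the family of
columns of a map. -/
def frobSeminorm (n : ℕ) : Seminorm ℝ (Euc n →ₗ[ℝ] Euc n) :=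
  (normSeminorm ℝ (PiLp 2 fun _ : Fin n => Euc n)).comp
    ((WithLp.linearEquiv 2 ℝ (Fin n → Euc n)).symm ∘ₗ
      LinearMap.pi fun j => LinearMap.applyₗ (EuclideanSpace.single j 1))

lemma frobSeminorm_apply {n : ℕ} (T : Euc n →ₗ[ℝ] Euc n) : frobSeminorm n T = frobNorm T := by
  calc frobSeminorm n T = √(∑ j, ‖T (EuclideanSpace.single j 1)‖ ^ 2) := PiLp.norm_eq_of_L2 _
    _ = frobNorm T := by simp [frobNorm, EuclideanSpace.norm_sq_eq]

/-- Theorem 3.2(ii): if `S` is not extreme, then for every `ε > 0` there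
is a linear map `T` with `‖T - Id‖ < ε`, `‖Tx‖ ≥ ‖x‖` for all `x ∈ S`, and `det T < 1`. -/
theorem not_extreme_exists_det_lt_one (n : ℕ) (hn : 2 ≤ n) (S : Finset (Euc n))
    (hunit : ∀ x ∈ S, ‖x‖ = 1) (hsym : ∀ x ∈ S, -x ∈ S)
    (hnotextreme : ¬ IsExtremeCfg (↑S : Set (Euc n))) :
    ∀ ε > (0 : ℝ), ∃ T : Euc n →ₗ[ℝ] Euc n,
      frobNorm (T - LinearMap.id) < ε ∧
      (∀ x ∈ S, ‖x‖ ≤ ‖T x‖) ∧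
      LinearMap.det T < 1 := by
  intro ε hε
  simpa only [frobSeminorm_apply] using
    not_extreme_exists_det_lt_one_general hsym hnotextreme (frobSeminorm n) hε

end
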